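/- arXiv:2202.03403 — 4 statements merged into one kernel-verified Lean document; each statement's English description precedes it below -/
import Mathlib

section
/- Let u be an indeterminate (equivalently, work over the rational function field F = ℚ(q,u)). Then the R-matrix satisfies the crossing symmetry relation R̄(u) · D_1 · (R̄(uξ))^{t_1} · D_1^{-1} = ((u − q^2)(uξ − 1)) / ((1 − u)(1 − uξq^2)) · Id on V ⊗ V. -/
/-!
Write `S = D₁ R̄(uξ)^{t₁} D₁⁻¹` (`Sbar`). Both `R̄(u)` and `S` preserve the decomposition of
`V ⊗ V` into the zero-weight space, spanned by the vectors `e_{i′} ⊗ e_i`, and the spaces spanned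
by `e_a ⊗ e_b` and `e_b ⊗ e_a` with `a ≠ b′`. On the latter the claim is a product of matrices of
size one or two (`Rbar_diag`, `Rbar_offdiag`, `Sbar_nonzero_weight`).

On the zero-weight space, put `x_i = q^{ī}` (`wt`), so that `x_{i′} = x_i⁻¹`. The `(i, k)` entry of
`R̄(u)` is a multiple of `x_i / x_k`, the multiple depending only on whether `k < i`, up to
corrections at `k = i` and `k = i′` (`aEnt_div`). The `(k, j)` entry of `S` has the same shape with
`x_j / x_k` (`pt1_zero_block`). Hence the product involves only the prefix sums of `x_k⁻²`
(`sum_step_products`), and these are geometric: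
`(q² - 1) ∑_{k < i} x_k⁻² = x_i⁻² + q² ξ`, increased by `q² - 1` when `i` lies in the second half
of the indices, while `(q² - 1) ∑_k x_k⁻² = -ξ⁻¹ + q² - 1 + q² ξ` (`prefix_sum`, `total_sum`).
Since the coefficient of `x_j / x_k` in `S` is divisible by `q² - 1`, no division by `q² - 1` is
needed. What remains (`zero_block`) is a rational identity in `q²`, `u`, `ξ`, `x_i`, `x_j` for each
relative position of `i`, `j`, `i′`, `j′`.
-/

noncomputable section

open Matrix Kronecker

/-- `primeIdx n i` is the 0-based version of the primed index `i′ = 2n+1−i` (1-based). -/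
def primeIdx (n : ℕ) (i : Fin (2*n)) : Fin (2*n) :=
  ⟨2*n - 1 - i.val, by have := i.isLt; omega⟩

/-- `barIdx n i` is `ī`: `n−i` for `1 ≤ i ≤ n` and `n+1−i` for `n+1 ≤ i ≤ 2n` (1-based). -/
def barIdx (n : ℕ) (i : Fin (2*n)) : ℤ :=
  if i.val < n then (n : ℤ) - 1 - i.val else (n : ℤ) - i.val

/-- `ξ = −q^{−2n}`. -/
def xiVal {F : Type*} [Field F] (n : ℕ) (q : F) : F := -q ^ (-(2 * (n : ℤ)))

/-- The entries `a_{ij}(u)` of the exceptional block of the R-matrix. -/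
def aEnt {F : Type*} [Field F] (n : ℕ) (q xi u : F) (i j : Fin (2*n)) : F :=
  if i = j then (q ^ (-2 : ℤ) * u - xi) * (u - 1)
  else if i.val < j.val then
    (q ^ (-2 : ℤ) - 1) *
      (q ^ (barIdx n i - barIdx n j) * xi * (u - 1)
        - (if i = primeIdx n j then (1 : F) else 0) * (u - xi))
  else
    (q ^ (-2 : ℤ) - 1) * u *
      (q ^ (barIdx n i - barIdx n j) * (u - 1)
        - (if i = primeIdx n j then (1 : F) else 0) * (u - xi))

/-- The R-matrix `R̄(u)` of type `A^{(2)}_{2n−1}` (with the parameter `ξ` explicit). -/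
def Rbar {F : Type*} [Field F] (n : ℕ) (q xi u : F) :
    Matrix (Fin (2*n) × Fin (2*n)) (Fin (2*n) × Fin (2*n)) F :=
  fun p r =>
    (if p.1 = p.2 ∧ p.1 = r.1 ∧ p.1 = r.2 then (1 : F) else 0)
    + (if p.1 = r.1 ∧ p.2 = r.2 ∧ p.1 ≠ p.2 ∧ p.1 ≠ primeIdx n p.2 then
        (u - 1) / (q * u - q⁻¹) else 0)
    + (if p.1 = r.2 ∧ p.2 = r.1 ∧ p.2.val < p.1.val ∧ p.1 ≠ primeIdx n p.2 then
        (q - q⁻¹) / (q * u - q⁻¹) else 0)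
    + (if p.1 = r.2 ∧ p.2 = r.1 ∧ p.1.val < p.2.val ∧ p.1 ≠ primeIdx n p.2 then
        (q - q⁻¹) * u / (q * u - q⁻¹) else 0)
    + (if p.1 = primeIdx n p.2 ∧ r.1 = primeIdx n r.2 then
        aEnt n q xi u p.2 r.2 / ((u - q ^ (-2 : ℤ)) * (u - xi)) else 0)

/-- Primed partial transpose in the first tensor factor. -/
def pt1 {F : Type*} [Field F] (n : ℕ)
    (X : Matrix (Fin (2*n) × Fin (2*n)) (Fin (2*n) × Fin (2*n)) F) :
    Matrix (Fin (2*n) × Fin (2*n)) (Fin (2*n) × Fin (2*n)) F :=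
  fun p r => X (primeIdx n r.1, p.2) (primeIdx n p.1, r.2)

/-! ### Indices, weights and geometric sums -/

section

variable {F : Type*} [Field F]

lemma primeIdx_val (n : ℕ) (i : Fin (2*n)) : (primeIdx n i).val = 2*n - 1 - i.val := rfl

lemma primeIdx_primeIdx (n : ℕ) (i : Fin (2*n)) : primeIdx n (primeIdx n i) = i := by
  ext; simp only [primeIdx_val]; omega

lemma primeIdx_inj (n : ℕ) (i j : Fin (2*n)) : primeIdx n i = primeIdx n j ↔ i = j :=
  ⟨fun h => by rw [← primeIdx_primeIdx n i, h, primeIdx_primeIdx], fun h => by rw [h]⟩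

lemma primeIdx_ne (n : ℕ) (i : Fin (2*n)) : primeIdx n i ≠ i := by
  intro h; have := congrArg Fin.val h; simp only [primeIdx_val] at this; omega

lemma eq_primeIdx_comm (n : ℕ) (i j : Fin (2*n)) : i = primeIdx n j ↔ j = primeIdx n i :=
  ⟨fun h => by rw [h, primeIdx_primeIdx], fun h => by rw [h, primeIdx_primeIdx]⟩

lemma barIdx_primeIdx (n : ℕ) (i : Fin (2*n)) : barIdx n (primeIdx n i) = - barIdx n i := by
  have := i.isLt
  simp only [barIdx, primeIdx_val]
  split_ifs <;> omega

/-- The summand equals `q^{-2k̄}`; as `k` runs through `0, …, 2n-1` its values are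
`q^{-2(n-1)}, …, q^{-2}, 1, 1, q^2, …, q^{2(n-1)}`, so beyond the repeated `1` the geometric sum
acquires an additional `q² - 1`. The factor `q² - 1` is kept on the left because `q² = 1` is
allowed. -/
lemma prefix_sum_range (n : ℕ) (q : F) (hq : q ≠ 0) (m : ℕ) :
    (q^2 - 1) * ∑ k ∈ Finset.range m,
        (if k < n then q ^ (2*(k:ℤ) - 2*n + 2) else q ^ (2*(k:ℤ) - 2*n))
      = (if m ≤ n then q ^ (2*(m:ℤ) - 2*n + 2) else q ^ (2*(m:ℤ) - 2*n) + (q^2 - 1))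
        + q^2 * xiVal n q := by
  have e2 : ∀ z : ℤ, q ^ (z + 2) = q ^ z * q ^ 2 := fun z => by
    rw [zpow_add₀ hq]; norm_cast
  induction m with
  | zero =>
    have : q ^ (2*((0:ℕ):ℤ) - 2*n + 2) = q ^ (-(2*(n:ℤ))) * q^2 := by
      rw [← e2]; congr 1; push_cast; ring
    simp only [Finset.range_zero, Finset.sum_empty, Nat.zero_le, if_true, this, xiVal]
    ring
  | succ m ih =>
    rw [Finset.sum_range_succ, mul_add, ih]
    have h : q ^ (2*((m+1:ℕ):ℤ) - 2*n) = q ^ (2*(m:ℤ) - 2*n) * q^2 := by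
      rw [← e2]; congr 1; push_cast; ring
    rcases lt_trichotomy m n with hm | hm | hm
    · rw [if_pos hm.le, if_pos hm, if_pos (by omega), e2, e2, h]; ring
    · subst hm
      rw [if_pos le_rfl, if_neg (lt_irrefl _), if_neg (by omega), e2, h]
      have : (2*(m:ℤ) - 2*m) = 0 := by ring
      rw [this, zpow_zero]; ring
    · rw [if_neg (by omega), if_neg (by omega), if_neg (by omega), h]; ring

/-- The weight `x_i = q^{ī}`. -/
def wt (n : ℕ) (q : F) (i : Fin (2*n)) : F := q ^ barIdx n i

lemma wt_ne_zero (n : ℕ) (q : F) (hq : q ≠ 0) (i : Fin (2*n)) : wt n q i ≠ 0 :=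
  zpow_ne_zero _ hq

lemma wt_primeIdx (n : ℕ) (q : F) (i : Fin (2*n)) :
    wt n q (primeIdx n i) = (wt n q i)⁻¹ := by
  simp only [wt, barIdx_primeIdx, _root_.zpow_neg]

lemma wt_inv_sq (n : ℕ) (q : F) (k : Fin (2*n)) :
    (wt n q k)⁻¹ ^ 2 =
      if k.val < n then q ^ (2*(k.val:ℤ) - 2*n + 2) else q ^ (2*(k.val:ℤ) - 2*n) := by
  simp only [wt, barIdx, ← _root_.zpow_neg]
  rw [← zpow_natCast, ← _root_.zpow_mul]
  split_ifs <;> congr 1 <;> push_cast <;> ring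

lemma sum_lt_eq_range (N : ℕ) (y : ℕ → F) (m : ℕ) (hm : m ≤ N) :
    ∑ k : Fin N, (if k.val < m then y k.val else 0) = ∑ k ∈ Finset.range m, y k := by
  rw [Fin.sum_univ_eq_sum_range (fun k => if k < m then y k else 0) N, ← Finset.sum_filter]
  congr 1
  ext a; simp only [Finset.mem_filter, Finset.mem_range]; omega

lemma prefix_sum (n : ℕ) (q : F) (hq : q ≠ 0) (i : Fin (2*n)) :
    (q^2 - 1) * ∑ k : Fin (2*n), (if k.val < i.val then (wt n q k)⁻¹ ^ 2 else 0)
      = (wt n q i)⁻¹ ^ 2 + (if i.val < n then 0 else q^2 - 1) + q^2 * xiVal n q := by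
  have := sum_lt_eq_range (2*n)
    (fun k => if k < n then q ^ (2*(k:ℤ) - 2*n + 2) else q ^ (2*(k:ℤ) - 2*n)) i.val i.isLt.le
  simp only [wt_inv_sq]
  rw [this, prefix_sum_range n q hq]
  rcases lt_trichotomy i.val n with h | h | h
  · rw [if_pos h.le, if_pos h, if_pos h]; ring
  · rw [if_pos h.le, if_neg (by omega), if_neg (by omega), h]
    have : (2*(n:ℤ) - 2*n) = 0 := by ring
    rw [this, zero_add, zpow_zero]
    norm_cast; ring
  · rw [if_neg (by omega), if_neg (by omega), if_neg (by omega)]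

lemma total_sum (n : ℕ) (hn : 2 ≤ n) (q : F) (hq : q ≠ 0) :
    (q^2 - 1) * ∑ k : Fin (2*n), (wt n q k)⁻¹ ^ 2
      = - (xiVal n q)⁻¹ + (q^2 - 1) + q^2 * xiVal n q := by
  have := sum_lt_eq_range (2*n)
    (fun k => if k < n then q ^ (2*(k:ℤ) - 2*n + 2) else q ^ (2*(k:ℤ) - 2*n)) (2*n) le_rfl
  simp only [Fin.is_lt, if_true] at this
  simp only [wt_inv_sq]
  rw [this, prefix_sum_range n q hq, if_neg (by omega)]
  have : (2*((2*n:ℕ):ℤ) - 2*n) = 2*n := by push_cast; ring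
  rw [this]
  simp only [xiVal, _root_.zpow_neg, inv_neg, inv_inv, neg_neg]

lemma double_step_sum {N : ℕ} (y : Fin N → F) (i j : Fin N) (a b c d : F) :
    ∑ k, (a + if k.val < i.val then b else 0) * (c + if k.val < j.val then d else 0) * y k
      = a * c * ∑ k, y k + a * d * (∑ k, if k.val < j.val then y k else 0)
        + b * c * (∑ k, if k.val < i.val then y k else 0)
        + b * d * (∑ k, if k.val < (min i j).val then y k else 0) := by
  simp only [Finset.mul_sum, ← Finset.sum_add_distrib]
  refine Finset.sum_congr rfl fun k _ => ?_
  by_cases h1 : k.val < i.val <;> by_cases h2 : k.val < j.val <;> simp [h1, h2] <;> ring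

/-! ### The zero-weight blocks -/

/-- Diagonal entry of the zero-weight block of `R̄(u)`, with `Q = q²`. -/
def cα (Q ξ u : F) : F := (u - Q * ξ) * (u - 1) / ((Q * u - 1) * (u - ξ))

/-- Coefficient of the part `q^{ī - k̄}` of the zero-weight block of `R̄(u)`. -/
def cβ (Q ξ u : F) : F := (1 - Q) * (u - 1) / ((Q * u - 1) * (u - ξ))

/-- Coefficient of the antidiagonal `k = i′` of the zero-weight block of `R̄(u)`. -/
def cγ (Q u : F) : F := (Q - 1) / (Q * u - 1)

/-- Coefficient of the part `q^{j̄ - k̄}` of the zero-weight block of `D₁ R̄(v)^{t₁} D₁⁻¹`. -/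
def cκ (Q v : F) : F := (Q - 1) / (Q * v - 1)

/-- Coefficient of the antidiagonal of the zero-weight block of `D₁ R̄(v)^{t₁} D₁⁻¹`. -/
def cμ (Q ξ v : F) : F := - (Q - 1) * (v - 1) / ((Q * v - 1) * (v - ξ))

lemma zpow_neg_two_eq (q : F) : q ^ (-2 : ℤ) = (q^2)⁻¹ := by
  rw [_root_.zpow_neg]; norm_cast

lemma zpow_barIdx_sub (n : ℕ) (q : F) (hq : q ≠ 0) (i j : Fin (2*n)) :
    q ^ (barIdx n i - barIdx n j) = wt n q i / wt n q j := zpow_sub₀ hq _ _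

lemma sub_inv_sq (q u : F) (hq : q ≠ 0) : u - (q^2)⁻¹ = (q^2 * u - 1) / q^2 := by
  field_simp

lemma mul_sub_inv (q u : F) (hq : q ≠ 0) : q * u - q⁻¹ = (q^2 * u - 1) / q := by
  field_simp

/-- The zero-weight block of `R̄(u)`, on the vectors `e_{i′} ⊗ e_i`, as a step function of `k`
times `x_i / x_k`, plus corrections at `k = i` and `k = i′`. -/
lemma aEnt_div (n : ℕ) (q ξ u : F) (hq : q ≠ 0) (h2 : q^2 * u - 1 ≠ 0) (h3 : u - ξ ≠ 0)
    (i k : Fin (2*n)) :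
    aEnt n q ξ u i k / ((u - q ^ (-2 : ℤ)) * (u - ξ))
      = (ξ + if k.val < i.val then u - ξ else 0) * (cβ (q^2) ξ u * wt n q i * (wt n q k)⁻¹)
        + (if k = i then cα (q^2) ξ u - cβ (q^2) ξ u * ξ else 0)
        + (if k = primeIdx n i then
            cγ (q^2) u * (if (primeIdx n i).val < i.val then u else 1) else 0) := by
  have hi := wt_ne_zero n q hq i
  have hk := wt_ne_zero n q hq k
  simp only [aEnt, zpow_neg_two_eq, sub_inv_sq q u hq, zpow_barIdx_sub n q hq,
    eq_primeIdx_comm n i k, cα, cβ, cγ]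
  rcases lt_trichotomy i.val k.val with h | h | h
  · have h' : i ≠ k := fun h' => by rw [h'] at h; omega
    by_cases hp : k = primeIdx n i
    · have h0 : ¬ (primeIdx n i).val < i.val := by rw [← hp]; omega
      simp only [eq_true h, eq_false h', eq_false h'.symm, h0, eq_true hp,
        not_lt.mpr h.le, if_true, if_false]
      field_simp
      ring
    · simp only [h, h', h'.symm, hp, not_lt.mpr h.le, if_true, if_false]
      field_simp
      ring
  · have h' : i = k := Fin.ext h
    subst h'
    simp only [lt_irrefl, (primeIdx_ne n i).symm, if_true, if_false]
    field_simp
    ring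
  · have h' : i ≠ k := fun h' => by rw [h'] at h; omega
    by_cases hp : k = primeIdx n i
    · have h0 : (primeIdx n i).val < i.val := by rw [← hp]; omega
      simp only [eq_true h, eq_false h', eq_false h'.symm, h0, eq_true hp,
        not_lt.mpr h.le, if_true, if_false]
      field_simp
      ring
    · simp only [h, h', h'.symm, hp, not_lt.mpr h.le, if_true, if_false]
      field_simp
      ring

/-- The zero-weight block of `D₁ R̄(v)^{t₁} D₁⁻¹`, in the same shape as for `R̄(u)` in
`aEnt_div`. -/
lemma pt1_zero_block (n : ℕ) (q ξ v : F) (hq : q ≠ 0) (h5 : q^2 * v - 1 ≠ 0) (h6 : v - ξ ≠ 0)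
    (k j : Fin (2*n)) :
    wt n q (primeIdx n k) * Rbar n q ξ v (j, k) (k, j) * (wt n q (primeIdx n j))⁻¹
      = (v + if k.val < j.val then 1 - v else 0) * (cκ (q^2) v * wt n q j * (wt n q k)⁻¹)
        + (if k = j then 1 - cκ (q^2) v * v else 0)
        + (if k = primeIdx n j then
            cμ (q^2) ξ v * (if (primeIdx n j).val < j.val then ξ else v) else 0) := by
  have hj := wt_ne_zero n q hq j
  have hk := wt_ne_zero n q hq k
  simp only [Rbar, wt_primeIdx, inv_inv, mul_sub_inv q v hq, true_and, ne_eq,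
    and_true, cκ, cμ, aEnt, zpow_neg_two_eq, sub_inv_sq q v hq, zpow_barIdx_sub n q hq,
    eq_primeIdx_comm n j k]
  rcases lt_trichotomy k.val j.val with h | h | h
  · have h' : k ≠ j := fun h' => by rw [h'] at h; omega
    by_cases hp : k = primeIdx n j
    · have h0 : (primeIdx n j).val < j.val := by rw [← hp]; omega
      have hx : wt n q j = (wt n q k)⁻¹ := by rw [hp, wt_primeIdx, inv_inv]
      simp only [eq_true h, eq_false h', eq_false h'.symm, eq_true h0, eq_true hp, hx,
        not_lt.mpr h.le, if_true, if_false, not_true_eq_false, and_false, and_true]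
      field_simp
      ring
    · simp only [h, h', h'.symm, hp, not_lt.mpr h.le, if_true, if_false, not_false_eq_true,
        and_false, and_true]
      field_simp
      ring
  · have h' : k = j := Fin.ext h
    subst h'
    simp only [lt_irrefl, (primeIdx_ne n k).symm, if_true, if_false, not_true_eq_false,
      and_false, false_and, and_true]
    field_simp
    ring
  · have h' : k ≠ j := fun h' => by rw [h'] at h; omega
    by_cases hp : k = primeIdx n j
    · have h0 : ¬ (primeIdx n j).val < j.val := by rw [← hp]; omega
      have hx : wt n q j = (wt n q k)⁻¹ := by rw [hp, wt_primeIdx, inv_inv]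
      simp only [eq_true h, eq_false h', eq_false h'.symm, eq_false h0, eq_true hp, hx,
        not_lt.mpr h.le, if_true, if_false, not_true_eq_false, and_false, and_true]
      field_simp
      ring
    · simp only [h, h', h'.symm, hp, not_lt.mpr h.le, if_true, if_false, not_false_eq_true,
        and_false, and_true]
      field_simp
      ring

/-- Product of two matrices of the shape found in `aEnt_div` and `pt1_zero_block`: all sums
reduce to prefix sums of `y²`. -/
lemma sum_step_products {N : ℕ} (y : Fin N → F) (i i' j j' : Fin N)
    (a b c d B A1 A2 K S1 S2 : F) :
    ∑ k, ((a + if k.val < i.val then b else 0) * (B * y k) + (if k = i then A1 else 0)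
          + (if k = i' then A2 else 0))
        * ((c + if k.val < j.val then d else 0) * (K * y k) + (if k = j then S1 else 0)
          + (if k = j' then S2 else 0))
      = B * K * (a * c * ∑ k, y k ^ 2 + a * d * (∑ k, if k.val < j.val then y k ^ 2 else 0)
        + b * c * (∑ k, if k.val < i.val then y k ^ 2 else 0)
        + b * d * (∑ k, if k.val < (min i j).val then y k ^ 2 else 0))
        + A1 * ((c + if i.val < j.val then d else 0) * (K * y i) + (if i = j then S1 else 0)
          + (if i = j' then S2 else 0))
        + A2 * ((c + if i'.val < j.val then d else 0) * (K * y i') + (if i' = j then S1 else 0)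
          + (if i' = j' then S2 else 0))
        + S1 * ((a + if j.val < i.val then b else 0) * (B * y j))
        + S2 * ((a + if j'.val < i.val then b else 0) * (B * y j')) := by
  rw [← double_step_sum (fun k => y k ^ 2), Finset.mul_sum]
  have hs : ∀ (m : Fin N) (f : Fin N → F), f m = ∑ k, if k = m then f k else 0 := by
    intro m f; simp
  rw [hs i (fun k => A1 * ((c + if k.val < j.val then d else 0) * (K * y k)
      + (if k = j then S1 else 0) + (if k = j' then S2 else 0))),
    hs i' (fun k => A2 * ((c + if k.val < j.val then d else 0) * (K * y k)
      + (if k = j then S1 else 0) + (if k = j' then S2 else 0))),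
    hs j (fun k => S1 * ((a + if k.val < i.val then b else 0) * (B * y k))),
    hs j' (fun k => S2 * ((a + if k.val < i.val then b else 0) * (B * y k)))]
  simp only [← Finset.sum_add_distrib]
  refine Finset.sum_congr rfl fun k _ => ?_
  generalize (a + if k.val < i.val then b else 0) = θ
  generalize (c + if k.val < j.val then d else 0) = φ
  generalize y k = z
  split_ifs <;> ring

/-- The crossing relation on the zero-weight space. -/
lemma zero_block (n : ℕ) (hn : 2 ≤ n) (q u : F) (hq : q ≠ 0)
    (h2 : q^2 * u - 1 ≠ 0) (h3 : u - xiVal n q ≠ 0)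
    (h5 : q^2 * (u * xiVal n q) - 1 ≠ 0) (h7 : u - 1 ≠ 0) (i j : Fin (2*n)) :
    ∑ k, aEnt n q (xiVal n q) u i k / ((u - q ^ (-2 : ℤ)) * (u - xiVal n q))
        * (wt n q (primeIdx n k) * Rbar n q (xiVal n q) (u * xiVal n q) (j, k) (k, j)
          * (wt n q (primeIdx n j))⁻¹)
      = if i = j then (u - q ^ 2) * (u * xiVal n q - 1) / ((1 - u) * (1 - u * xiVal n q * q ^ 2))
        else 0 := by
  have hξ : xiVal n q ≠ 0 := neg_ne_zero.mpr (zpow_ne_zero _ hq)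
  have h6 : u * xiVal n q - xiVal n q ≠ 0 := by
    rw [show u * xiVal n q - xiVal n q = (u - 1) * xiVal n q by ring]; exact mul_ne_zero h7 hξ
  have hc : (u - q ^ 2) * (u * xiVal n q - 1) / ((1 - u) * (1 - u * xiVal n q * q ^ 2))
      = (u - q ^ 2) * (u * xiVal n q - 1) / ((u - 1) * (q^2 * (u * xiVal n q) - 1)) := by
    congr 1; ring
  rw [hc]
  simp only [aEnt_div n q _ u hq h2 h3, pt1_zero_block n q _ _ hq h5 h6]
  rw [sum_step_products (fun k => (wt n q k)⁻¹)]
  -- The factor `q² - 1` of `cκ` turns the geometric sums into their closed forms.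
  have hκ : cκ (q^2) (u * xiVal n q) = (q^2 - 1) * (q^2 * (u * xiVal n q) - 1)⁻¹ := by
    rw [cκ, div_eq_mul_inv]
  have hsum : ∀ a b c d e f g h s : F,
      s * wt n q i * (cκ (q^2) (u * xiVal n q) * wt n q j) * (a * e + b * f + c * g + d * h)
      = s * wt n q i * wt n q j * (q^2 * (u * xiVal n q) - 1)⁻¹
        * (a * ((q^2 - 1) * e) + b * ((q^2 - 1) * f) + c * ((q^2 - 1) * g)
          + d * ((q^2 - 1) * h)) := by
    intros; rw [hκ]; ring
  rw [hsum, total_sum n hn q hq, prefix_sum n q hq, prefix_sum n q hq, prefix_sum n q hq]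
  have hX := wt_ne_zero n q hq i
  have hY := wt_ne_zero n q hq j
  have hmin : min i j = if i.val < j.val then i else j := by
    split_ifs with h
    · exact min_eq_left (Fin.le_def.mpr h.le)
    · exact min_eq_right (Fin.le_def.mpr (not_lt.mp h))
  rw [hmin]
  have hieq : (i = j) = (i.val = j.val) := by rw [Fin.ext_iff]
  have hpeq : (i = primeIdx n j) = (i.val + j.val + 1 = 2 * n) := by
    rw [Fin.ext_iff, primeIdx_val, eq_iff_iff]; omega
  have hpeq' : (primeIdx n i = j) = (i.val + j.val + 1 = 2 * n) := by
    rw [Fin.ext_iff, primeIdx_val, eq_iff_iff]; omega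
  have hlt1 : ((primeIdx n i).val < j.val) = (2 * n < i.val + j.val + 1) := by
    rw [primeIdx_val, eq_iff_iff]; omega
  have hlt2 : ((primeIdx n j).val < i.val) = (2 * n < i.val + j.val + 1) := by
    rw [primeIdx_val, eq_iff_iff]; omega
  have hlt3 : ((primeIdx n i).val < i.val) = ¬ (i.val < n) := by
    rw [primeIdx_val, eq_iff_iff]; omega
  have hlt4 : ((primeIdx n j).val < j.val) = ¬ (j.val < n) := by
    rw [primeIdx_val, eq_iff_iff]; omega
  have hXY : i.val + j.val + 1 = 2 * n → wt n q j = (wt n q i)⁻¹ := by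
    intro h; rw [← hpeq'] at h; rw [← h, wt_primeIdx]
  have hXX : i.val = j.val → wt n q j = wt n q i := by
    intro h; rw [← hieq] at h; rw [h]
  simp only [wt_primeIdx, hlt1, hlt2, hlt3, hlt4, hpeq, hpeq', primeIdx_inj, hieq, cα, cβ, cγ, cκ,
    cμ, apply_ite (wt n q), apply_ite Fin.val]
  have h6' : u * xiVal n q - xiVal n q = (u - 1) * xiVal n q := by ring
  rw [h6']
  generalize wt n q i = X at *
  generalize wt n q j = Y at *
  generalize xiVal n q = ξ at *
  have hin := i.isLt
  have hjn := j.isLt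
  generalize i.val = a at *
  generalize j.val = b at *
  generalize q^2 = Q at *
  clear hmin hieq hpeq hpeq' hlt1 hlt2 hlt3 hlt4 hsum hκ hc
  have h5' : Q * u * ξ - 1 ≠ 0 := by rwa [mul_assoc]
  rcases lt_trichotomy a b with h | h | h
  · rcases lt_trichotomy (2 * n) (a + b + 1) with h' | h' | h'
    · by_cases ha : a < n <;> by_cases hb : b < n <;>
      first
      | (exfalso; omega)
      | (simp only [h, h.ne, not_lt.mpr h.le, h', h'.ne', ha, hb, not_true_eq_false, not_false_eq_true,
          if_true, if_false]
         field_simp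
         ring1)
    · obtain rfl := hXY h'.symm
      by_cases ha : a < n <;> by_cases hb : b < n <;>
      first
      | (exfalso; omega)
      | (simp only [h, h.ne, not_lt.mpr h.le, ← h', ha, hb, lt_irrefl, not_true_eq_false, not_false_eq_true,
          if_true, if_false]
         field_simp
         ring1)
    · by_cases ha : a < n <;> by_cases hb : b < n <;>
      first
      | (exfalso; omega)
      | (simp only [h, h.ne, not_lt.mpr h.le, h'.ne, not_lt.mpr h'.le, ha, hb, not_true_eq_false, not_false_eq_true,
          if_true, if_false]
         field_simp
         ring1)
  · obtain rfl := hXX h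
    subst h
    by_cases ha : a < n
    · have h1 : ¬ 2 * n < a + a + 1 := by omega
      have h2 : a + a + 1 ≠ 2 * n := by omega
      simp only [h1, h2, ha, lt_irrefl, not_true_eq_false, if_true, if_false]
      field_simp
      ring1
    · have h1 : 2 * n < a + a + 1 := by omega
      have h2 : a + a + 1 ≠ 2 * n := by omega
      simp only [h1, h2, ha, lt_irrefl, not_false_eq_true, if_true, if_false]
      field_simp
      ring1
  · rcases lt_trichotomy (2 * n) (a + b + 1) with h' | h' | h'
    · by_cases ha : a < n <;> by_cases hb : b < n <;>
      first
      | (exfalso; omega)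
      | (simp only [h, h.ne', not_lt.mpr h.le, h', h'.ne', ha, hb, not_true_eq_false, not_false_eq_true,
          if_true, if_false]
         field_simp
         ring1)
    · obtain rfl := hXY h'.symm
      by_cases ha : a < n <;> by_cases hb : b < n <;>
      first
      | (exfalso; omega)
      | (simp only [h, h.ne', not_lt.mpr h.le, ← h', ha, hb, lt_irrefl, not_true_eq_false, not_false_eq_true,
          if_true, if_false]
         field_simp
         ring1)
    · by_cases ha : a < n <;> by_cases hb : b < n <;>
      first
      | (exfalso; omega)
      | (simp only [h, h.ne', not_lt.mpr h.le, h'.ne, not_lt.mpr h'.le, ha, hb, not_true_eq_false, not_false_eq_true,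
          if_true, if_false]
         field_simp
         ring1)

/-! ### The nonzero-weight blocks and the full product -/

/-- The matrix `D₁ R̄(v)^{t₁} D₁⁻¹`. -/
def Sbar (n : ℕ) (q ξ v : F) :
    Matrix (Fin (2*n) × Fin (2*n)) (Fin (2*n) × Fin (2*n)) F :=
  fun s r => wt n q s.1 * Rbar n q ξ v (primeIdx n r.1, s.2) (primeIdx n s.1, r.2)
    * (wt n q r.1)⁻¹

lemma Rbar_zero_weight (n : ℕ) (q ξ u : F) (i : Fin (2*n)) (s : Fin (2*n) × Fin (2*n)) :
    Rbar n q ξ u (primeIdx n i, i) s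
      = if s.1 = primeIdx n s.2 then
          aEnt n q ξ u i s.2 / ((u - q ^ (-2 : ℤ)) * (u - ξ)) else 0 := by
  simp [Rbar, primeIdx_ne]

lemma Rbar_diag (n : ℕ) (q ξ u : F) (a : Fin (2*n)) (s : Fin (2*n) × Fin (2*n)) :
    Rbar n q ξ u (a, a) s = if s = (a, a) then 1 else 0 := by
  simp [Rbar, (primeIdx_ne n a).symm, Prod.ext_iff, eq_comm]

lemma Rbar_offdiag (n : ℕ) (q ξ u : F) (a b : Fin (2*n)) (hab : a ≠ b) (hp : a ≠ primeIdx n b)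
    (s : Fin (2*n) × Fin (2*n)) :
    Rbar n q ξ u (a, b) s
      = (if s = (a, b) then (u - 1) / (q * u - q⁻¹) else 0)
        + (if s = (b, a) then
            (q - q⁻¹) * (if a.val < b.val then u else 1) / (q * u - q⁻¹) else 0) := by
  obtain ⟨s1, s2⟩ := s
  simp only [Rbar, hab, hp, false_and, if_false, Prod.mk.injEq, ne_eq, not_false_eq_true,
    and_true, zero_add, add_zero]
  have e1 : (a = s1 ∧ b = s2) = (s1 = a ∧ s2 = b) := by simp only [eq_comm]
  have e2 : ∀ P : Prop, (a = s2 ∧ b = s1 ∧ P) = ((s1 = b ∧ s2 = a) ∧ P) := by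
    intro P; rw [eq_iff_iff]; constructor
    · rintro ⟨rfl, rfl, h⟩; exact ⟨⟨rfl, rfl⟩, h⟩
    · rintro ⟨⟨rfl, rfl⟩, h⟩; exact ⟨rfl, rfl, h⟩
  simp only [e1, e2, add_assoc]
  congr 1
  by_cases h : s1 = b ∧ s2 = a
  · rcases lt_or_gt_of_ne (fun h => hab (Fin.ext h)) with h' | h' <;>
      simp only [h, h', not_lt.mpr h'.le, true_and, and_self, if_true, if_false] <;> ring
  · simp only [h, false_and, if_false, add_zero]

lemma Sbar_zero_weight (n : ℕ) (q ξ v : F) (k : Fin (2*n)) (r : Fin (2*n) × Fin (2*n))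
    (hr : r.1 ≠ primeIdx n r.2) : Sbar n q ξ v (primeIdx n k, k) r = 0 := by
  have h1 : primeIdx n r.1 ≠ r.2 := fun h => hr (by rw [← h, primeIdx_primeIdx])
  have h2 : ∀ P : Prop, ¬ (primeIdx n r.1 = k ∧ k = r.2 ∧ P) :=
    fun P h => h1 (h.1.trans h.2.1)
  have h3 : ¬ (primeIdx n r.1 = primeIdx n k ∧ k = primeIdx n r.2) := by
    rintro ⟨h, h'⟩; exact hr (((primeIdx_inj n _ _).mp h).trans h')
  simp [Sbar, Rbar, primeIdx_primeIdx, h1, h2, h3]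

lemma Sbar_nonzero_weight (n : ℕ) (q ξ v : F) (hq : q ≠ 0) (h5 : q^2 * v - 1 ≠ 0)
    (h6 : v - ξ ≠ 0) (a b : Fin (2*n)) (hp : a ≠ primeIdx n b) (r : Fin (2*n) × Fin (2*n)) :
    Sbar n q ξ v (a, b) r
      = (if r = (a, b) then (if a = b then 0 else (v - 1) / (q * v - q⁻¹)) else 0)
        + (if r = (b, a) then
            (if a = b then cα (q^2) ξ v
              else cβ (q^2) ξ v * (if a.val < b.val then v else ξ)) else 0) := by
  obtain ⟨r1, r2⟩ := r
  have hp1 : b ≠ primeIdx n a := fun h => hp ((eq_primeIdx_comm n _ _).mpr h)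
  have ha := wt_ne_zero n q hq a
  have hb := wt_ne_zero n q hq b
  have t1 : ¬ (primeIdx n r1 = b ∧ primeIdx n r1 = primeIdx n a ∧ primeIdx n r1 = r2) := by
    rintro ⟨h, h', -⟩; exact hp1 (h.symm.trans h')
  have t3 : ∀ P : Prop, ¬ (primeIdx n r1 = r2 ∧ b = primeIdx n a ∧ P) :=
    fun P h => hp1 h.2.1
  have t2 : (primeIdx n r1 = primeIdx n a ∧ b = r2 ∧ primeIdx n r1 ≠ b
      ∧ primeIdx n r1 ≠ primeIdx n b) = ((r1 = a ∧ r2 = b) ∧ a ≠ b) := by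
    simp only [ne_eq, primeIdx_inj, eq_iff_iff]; constructor
    · rintro ⟨rfl, rfl, -, h⟩; exact ⟨⟨rfl, rfl⟩, h⟩
    · rintro ⟨⟨rfl, rfl⟩, h⟩; exact ⟨rfl, rfl, hp1.symm, h⟩
  have t5 : (primeIdx n r1 = primeIdx n b ∧ primeIdx n a = primeIdx n r2)
      = (r1 = b ∧ r2 = a) := by
    simp only [primeIdx_inj, eq_comm]
  simp only [Sbar, Rbar, t1, t3, t2, t5, if_false, zero_add, add_zero, Prod.mk.injEq]
  rw [mul_add, add_mul]
  congr 1
  · by_cases h : r1 = a ∧ r2 = b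
    · obtain ⟨rfl, rfl⟩ := h
      by_cases hab : r1 = r2
      · simp [hab]
      · simp [hab]; field_simp
    · simp [h]
  · by_cases h : r1 = b ∧ r2 = a
    · obtain ⟨rfl, rfl⟩ := h
      simp only [true_and, if_true, aEnt, hp1, if_false, zpow_neg_two_eq, sub_inv_sq q v hq,
        zpow_barIdx_sub n q hq, cα, cβ]
      rcases lt_trichotomy r1.val r2.val with h | h | h
      · have h' : r1 ≠ r2 := fun h' => by rw [h'] at h; omega
        simp only [h, h', h'.symm, not_lt.mpr h.le, if_true, if_false]
        field_simp
        ring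
      · obtain rfl := Fin.ext h
        simp only [if_true]
        field_simp
      · have h' : r1 ≠ r2 := fun h' => by rw [h'] at h; omega
        simp only [h, h', h'.symm, not_lt.mpr h.le, if_true, if_false]
        field_simp
        ring
    · simp [h]

lemma sum_zero_weight (n : ℕ) (f : Fin (2*n) × Fin (2*n) → F) :
    ∑ s, (if s.1 = primeIdx n s.2 then f s else 0) = ∑ k, f (primeIdx n k, k) := by
  rw [Fintype.sum_prod_type_right]
  simp

lemma Rbar_mul_Sbar (n : ℕ) (hn : 2 ≤ n) (q u : F) (hq : q ≠ 0)
    (h2 : q^2 * u - 1 ≠ 0) (h3 : u - xiVal n q ≠ 0)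
    (h5 : q^2 * (u * xiVal n q) - 1 ≠ 0) (h7 : u - 1 ≠ 0) (p r : Fin (2*n) × Fin (2*n)) :
    ∑ s, Rbar n q (xiVal n q) u p s * Sbar n q (xiVal n q) (u * xiVal n q) s r
      = if p = r then
          (u - q ^ 2) * (u * xiVal n q - 1) / ((1 - u) * (1 - u * xiVal n q * q ^ 2)) else 0 := by
  have hξ : xiVal n q ≠ 0 := neg_ne_zero.mpr (zpow_ne_zero _ hq)
  have h6 : u * xiVal n q - xiVal n q ≠ 0 := by
    rw [show u * xiVal n q - xiVal n q = (u - 1) * xiVal n q by ring]; exact mul_ne_zero h7 hξ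
  obtain ⟨a, b⟩ := p
  obtain ⟨c, d⟩ := r
  by_cases hp : a = primeIdx n b
  · subst hp
    simp only [Rbar_zero_weight, ite_mul, zero_mul]
    rw [sum_zero_weight n (fun s => aEnt n q (xiVal n q) u b s.2
      / ((u - q ^ (-2 : ℤ)) * (u - xiVal n q)) * Sbar n q (xiVal n q) (u * xiVal n q) s (c, d))]
    by_cases hr : c = primeIdx n d
    · subst hr
      have := zero_block n hn q u hq h2 h3 h5 h7 b d
      simp only [Sbar, primeIdx_primeIdx, Prod.mk.injEq, primeIdx_inj, and_self]
      exact this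
    · simp only [Sbar_zero_weight n q _ _ _ (c, d) hr, mul_zero, Finset.sum_const_zero]
      rw [if_neg]
      simp only [Prod.mk.injEq]; rintro ⟨rfl, rfl⟩; exact hr rfl
  · have hp1 : b ≠ primeIdx n a := fun h => hp ((eq_primeIdx_comm n _ _).mpr h)
    have hc : (u - q ^ 2) * (u * xiVal n q - 1) / ((1 - u) * (1 - u * xiVal n q * q ^ 2))
        = (u - q ^ 2) * (u * xiVal n q - 1) / ((u - 1) * (q^2 * u * xiVal n q - 1)) := by
      congr 1; ring
    have h5' : q^2 * u * xiVal n q - 1 ≠ 0 := by rwa [mul_assoc]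
    have h5a : u * q^2 * xiVal n q - 1 ≠ 0 := by rwa [mul_comm u]
    have h2a : u * q^2 - 1 ≠ 0 := by rwa [mul_comm u]
    have h6' : u * xiVal n q - xiVal n q = (u - 1) * xiVal n q := by ring
    by_cases hab : a = b
    · subst hab
      simp only [Rbar_diag, ite_mul, zero_mul, one_mul, Finset.sum_ite_eq', Finset.mem_univ,
        if_true, Sbar_nonzero_weight n q _ _ hq h5 h6 a a hp, eq_comm (a := (c, d)), ite_self,
        zero_add, hc, cα, h6']
      split_ifs
      · field_simp
      · rfl
    · simp only [Rbar_offdiag n q _ u a b hab hp, add_mul, ite_mul, zero_mul,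
        Finset.sum_add_distrib, Finset.sum_ite_eq', Finset.mem_univ, if_true,
        Sbar_nonzero_weight n q _ _ hq h5 h6 a b hp, Sbar_nonzero_weight n q _ _ hq h5 h6 b a hp1,
        eq_comm (a := (c, d)), hc, cβ, hab, Ne.symm hab, if_false, h6', mul_sub_inv q _ hq]
      have hne : (a, b) ≠ (b, a) := fun h => hab (Prod.ext_iff.mp h).1
      by_cases e1 : (a, b) = (c, d)
      · have e2 : (b, a) ≠ (c, d) := fun h => hne (e1.trans h.symm)
        rcases lt_or_gt_of_ne (fun h => hab (Fin.ext h)) with h' | h' <;>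
        · simp only [e1, e2, h', not_lt.mpr h'.le, if_true, if_false, zero_add, add_zero]
          field_simp
          ring
      · by_cases e2 : (b, a) = (c, d)
        · rcases lt_or_gt_of_ne (fun h => hab (Fin.ext h)) with h' | h' <;>
          · simp only [e1, e2, h', not_lt.mpr h'.le, if_true, if_false, zero_add, add_zero]
            field_simp
            ring
        · simp only [e1, e2, if_false, add_zero, mul_zero]

end

/-- Crossing symmetry:
`R̄(u) D₁ R̄(uξ)^{t₁} D₁⁻¹ = ((u−q²)(uξ−1))/((1−u)(1−uξq²)) · Id`. -/
theorem crossing_symmetry_Rbar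
    {F : Type*} [Field F] (n : ℕ) (hn : 2 ≤ n) (q u : F) (hq : q ≠ 0)
    (h1 : q * u - q⁻¹ ≠ 0)
    (h2 : u - q ^ (-2 : ℤ) ≠ 0)
    (h3 : u - xiVal n q ≠ 0)
    (h4 : q * (u * xiVal n q) - q⁻¹ ≠ 0)
    (h5 : u * xiVal n q - q ^ (-2 : ℤ) ≠ 0)
    (h6 : u * xiVal n q - xiVal n q ≠ 0)
    (h7 : (1 : F) - u ≠ 0)
    (h8 : (1 : F) - u * xiVal n q * q ^ 2 ≠ 0) :
    Rbar n q (xiVal n q) u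
      * ((Matrix.diagonal fun i => q ^ barIdx n i) ⊗ₖ (1 : Matrix (Fin (2*n)) (Fin (2*n)) F))
      * pt1 n (Rbar n q (xiVal n q) (u * xiVal n q))
      * ((Matrix.diagonal fun i => q ^ (-barIdx n i)) ⊗ₖ (1 : Matrix (Fin (2*n)) (Fin (2*n)) F))
    = ((u - q ^ 2) * (u * xiVal n q - 1) / ((1 - u) * (1 - u * xiVal n q * q ^ 2)))
        • (1 : Matrix (Fin (2*n) × Fin (2*n)) (Fin (2*n) × Fin (2*n)) F) := by
  have e : q ^ (-2 : ℤ) = (q^2)⁻¹ := zpow_neg_two_eq q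
  have h2' : q^2 * u - 1 ≠ 0 := by
    rw [e, sub_inv_sq q u hq] at h2; exact fun h => h2 (by rw [h, zero_div])
  have h5' : q^2 * (u * xiVal n q) - 1 ≠ 0 := by
    rw [e, sub_inv_sq q _ hq] at h5; exact fun h => h5 (by rw [h, zero_div])
  have h7' : u - 1 ≠ 0 := fun h => h7 (by rw [← neg_sub, h, neg_zero])
  ext p r
  have key := Rbar_mul_Sbar n hn q u hq h2' h3 h5' h7' p r
  rw [← Matrix.diagonal_one, Matrix.diagonal_kronecker_diagonal,
    Matrix.diagonal_kronecker_diagonal, Matrix.mul_diagonal, Matrix.mul_apply,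
    Finset.sum_mul, Matrix.smul_apply, Matrix.one_apply, smul_eq_mul, mul_ite,
    mul_one (_ / _), mul_zero, ← key]
  refine Finset.sum_congr rfl fun s _ => ?_
  rw [Matrix.mul_diagonal]
  simp only [pt1, Sbar, wt, mul_one, _root_.zpow_neg]
  ring

end
end

section
/- Regard the entries of R̄(u) as rational functions of u over the field ℚ(q). Every entry of (u − ξ)·R̄(u) is regular at u = ξ, and the entrywise value at u = ξ is given by [(u − ξ)·R̄(u)]|_{u=ξ} = ((q^{−2} − 1)·ξ·(ξ − 1)/(ξ − q^{−2})) · Q. In particular, R̄(u) has at most a simple pole at u = ξ, and its residue there is a nonzero scalar multiple of the rank-one operator Q. -/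
/-!
Regularity at a point together with the value there is expressed by the relation `HasVal`, which is
compatible with the field operations (division requires the denominator to have nonzero value) and
determines `RatFunc.denom` and `RatFunc.eval` as required (`HasVal.denom_ne_zero_and_eval`).

The denominators `qu - q⁻¹` and `u - q⁻²` do not vanish at `u = ξ = -q^{-2n}`, since `-1` is not a
power of `q` in `ℚ(q)`. Hence only the exceptional block `a_{ij}(u) / ((u - q⁻²)(u - ξ))` of `R̄(u)`
has a pole at `ξ`; the remaining summands are annihilated by the factor `u - ξ`. Finally
`a_{ij}(ξ) = (q⁻² - 1) ξ (ξ - 1) q^{ī - j̄}` in all three cases of its definition (`hasVal_aEnt`).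
-/

set_option maxHeartbeats 1000000

noncomputable section

open Matrix Kronecker

/-- The operator `Q = Σ_{i,j} q^{ī−j̄} e_{i′j′}⊗e_{ij}`. -/
def Qmat {F : Type*} [Field F] (n : ℕ) (q : F) :
    Matrix (Fin (2*n) × Fin (2*n)) (Fin (2*n) × Fin (2*n)) F :=
  fun p r =>
    if p.1 = primeIdx n p.2 ∧ r.1 = primeIdx n r.2 then
      q ^ (barIdx n p.2 - barIdx n r.2) else 0

/-- The base field `ℚ(q)`, with `q` the indeterminate. -/
abbrev Fq : Type := RatFunc ℚ

/-- The indeterminate `q` of `ℚ(q)`. -/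
def q0 : Fq := RatFunc.X

/-- The field `ℚ(q)(u)` of rational functions in `u` over `ℚ(q)`. -/
abbrev Ku : Type := RatFunc Fq

/-- `q` viewed as a constant of `ℚ(q)(u)`. -/
def qK : Ku := RatFunc.C q0

/-- The indeterminate `u` of `ℚ(q)(u)`. -/
def uK : Ku := RatFunc.X

/-- `ξ = −q^{−2n}` as an element of `ℚ(q)`. -/
def xi0 (n : ℕ) : Fq := -q0 ^ (-(2 * (n : ℤ)))

/-- `HasVal x f v`: the rational function `f` is regular at `x` with value `v`, i.e. it can be
written as a quotient `N / D` of polynomials (not necessarily in lowest terms) with `D(x) ≠ 0`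
and `N(x) / D(x) = v`. -/
def HasVal {k : Type*} [Field k] (x : k) (f : RatFunc k) (v : k) : Prop :=
  ∃ N D : Polynomial k, D.eval x ≠ 0 ∧
    f = algebraMap (Polynomial k) (RatFunc k) N / algebraMap (Polynomial k) (RatFunc k) D ∧
    v = N.eval x / D.eval x

namespace HasVal

variable {k : Type*} [Field k] {x : k} {f g : RatFunc k} {v w : k}

lemma map_ne_zero_of_eval {D : Polynomial k} (h : D.eval x ≠ 0) :
    algebraMap (Polynomial k) (RatFunc k) D ≠ 0 :=
  RatFunc.algebraMap_ne_zero (by rintro rfl; simp at h)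

lemma const (c : k) : HasVal x (RatFunc.C c) c :=
  ⟨Polynomial.C c, 1, by simp, by simp, by simp⟩

lemma zero : HasVal x (0 : RatFunc k) 0 := by simpa using const (x := x) (0 : k)

lemma one : HasVal x (1 : RatFunc k) 1 := by simpa using const (x := x) (1 : k)

lemma var : HasVal x (RatFunc.X : RatFunc k) x :=
  ⟨Polynomial.X, 1, by simp, by simp, by simp⟩

lemma add (hf : HasVal x f v) (hg : HasVal x g w) : HasVal x (f + g) (v + w) := by
  obtain ⟨N, D, hD, rfl, rfl⟩ := hf
  obtain ⟨M, E, hE, rfl, rfl⟩ := hg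
  refine ⟨N * E + D * M, D * E, by simp [hD, hE], ?_, ?_⟩
  · rw [div_add_div _ _ (map_ne_zero_of_eval hD) (map_ne_zero_of_eval hE)]
    simp only [map_add, map_mul]
  · rw [div_add_div _ _ hD hE]
    simp

lemma mul (hf : HasVal x f v) (hg : HasVal x g w) : HasVal x (f * g) (v * w) := by
  obtain ⟨N, D, hD, rfl, rfl⟩ := hf
  obtain ⟨M, E, hE, rfl, rfl⟩ := hg
  refine ⟨N * M, D * E, by simp [hD, hE], ?_, ?_⟩
  · simp only [map_mul, div_mul_div_comm]
  · simp only [Polynomial.eval_mul, div_mul_div_comm]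

lemma sub (hf : HasVal x f v) (hg : HasVal x g w) : HasVal x (f - g) (v - w) := by
  have h := hf.add ((const (x := x) (-1 : k)).mul hg)
  simpa [sub_eq_add_neg] using h

lemma inv (hf : HasVal x f v) (hv : v ≠ 0) : HasVal x f⁻¹ v⁻¹ := by
  obtain ⟨N, D, hD, rfl, rfl⟩ := hf
  have hN : N.eval x ≠ 0 := fun h => hv (by simp [h])
  exact ⟨D, N, hN, by rw [inv_div], by rw [inv_div]⟩

lemma div (hf : HasVal x f v) (hg : HasVal x g w) (hw : w ≠ 0) : HasVal x (f / g) (v / w) := by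
  simpa only [div_eq_mul_inv] using hf.mul (hg.inv hw)

lemma ite_zero {P : Prop} [Decidable P] (h : P → HasVal x f v) :
    HasVal x (if P then f else 0) (if P then v else 0) := by
  split_ifs with hP
  · exact h hP
  · exact zero

/-- The reduced denominator divides any denominator, so `HasVal` controls `RatFunc.denom` and
`RatFunc.eval`. -/
lemma denom_ne_zero_and_eval (hf : HasVal x f v) :
    (RatFunc.denom f).eval x ≠ 0 ∧ RatFunc.eval (RingHom.id k) x f = v := by
  obtain ⟨N, D, hD, rfl, rfl⟩ := hf
  have hD0 : D ≠ 0 := by rintro rfl; simp at hD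
  have hdvd := RatFunc.denom_div_dvd N D
  have hden := fun h => hD (Polynomial.eval_eq_zero_of_dvd_of_eval_eq_zero hdvd h)
  refine ⟨hden, ?_⟩
  have hnd := congrArg (Polynomial.eval x)
    ((RatFunc.num_mul_eq_mul_denom_iff (p := N) hD0).mpr rfl)
  rw [Polynomial.eval_mul, Polynomial.eval_mul] at hnd
  rw [RatFunc.eval, Polynomial.eval₂_id, Polynomial.eval₂_id]
  exact (div_eq_div_iff hden hD).mpr hnd

end HasVal

lemma q0_ne_zero : q0 ≠ 0 := RatFunc.X_ne_zero

/-- `-1` is not a power of the indeterminate `q`: specialise `q = 1`. -/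
lemma q0_pow_ne_neg_one (m : ℕ) : q0 ^ m ≠ -1 := by
  intro h
  have h' : (Polynomial.X ^ m : Polynomial ℚ) = -1 := by
    apply RatFunc.algebraMap_injective ℚ
    simpa [q0] using h
  have := congrArg (Polynomial.eval 1) h'
  norm_num at this

lemma xi0_sub_ne_zero (n : ℕ) (hn : 2 ≤ n) : xi0 n - q0 ^ (-2 : ℤ) ≠ 0 := by
  intro h
  apply q0_pow_ne_neg_one (2 * n - 2)
  have h1 : q0 ^ (-2 : ℤ) = -q0 ^ (-(2 * (n : ℤ))) := (sub_eq_zero.mp h).symm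
  have h2 : q0 ^ (2 * n - 2) = q0 ^ (2 * (n : ℤ)) * q0 ^ (-2 : ℤ) := by
    rw [← zpow_add₀ q0_ne_zero, ← zpow_natCast]
    congr 1
    omega
  rw [h2, h1, mul_neg, ← zpow_add₀ q0_ne_zero]
  simp

/-- `qξ - q⁻¹ = q(ξ - q⁻²)`, so this denominator is regular at `ξ` as well. -/
lemma q0_mul_xi0_sub_ne_zero (n : ℕ) (hn : 2 ≤ n) : q0 * xi0 n - q0⁻¹ ≠ 0 := by
  have h : q0 * xi0 n - q0⁻¹ = q0 * (xi0 n - q0 ^ (-2 : ℤ)) := by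
    have := q0_ne_zero
    rw [_root_.zpow_neg]
    field_simp
  rw [h]
  exact mul_ne_zero q0_ne_zero (xi0_sub_ne_zero n hn)

lemma qK_zpow (m : ℤ) : qK ^ m = RatFunc.C (q0 ^ m) := by
  rw [qK, map_zpow₀]

lemma xiVal_qK (n : ℕ) : xiVal n qK = RatFunc.C (xi0 n) := by
  rw [xiVal, xi0, qK_zpow, map_neg]

lemma uK_sub_xi_ne_zero (n : ℕ) : uK - RatFunc.C (xi0 n) ≠ 0 := by
  rw [uK, ← RatFunc.algebraMap_X, ← RatFunc.algebraMap_C, ← map_sub]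
  exact RatFunc.algebraMap_ne_zero (Polynomial.X_sub_C_ne_zero _)

/-- At `u = ξ` the three cases in the definition of `a_{ij}` merge into one formula: the
Kronecker delta terms carry the factor `u - ξ`. -/
lemma hasVal_aEnt (n : ℕ) (i j : Fin (2*n)) :
    HasVal (xi0 n) (aEnt n qK (RatFunc.C (xi0 n)) uK i j)
      ((q0 ^ (-2 : ℤ) - 1) * xi0 n * (xi0 n - 1) * q0 ^ (barIdx n i - barIdx n j)) := by
  have hu : HasVal (xi0 n) uK (xi0 n) := HasVal.var
  have hxi : HasVal (xi0 n) (RatFunc.C (xi0 n)) (xi0 n) := HasVal.const _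
  have hq (m : ℤ) : HasVal (xi0 n) (qK ^ m) (q0 ^ m) := by
    rw [qK_zpow]
    exact HasVal.const _
  have hdelta : HasVal (xi0 n)
      ((if i = primeIdx n j then (1 : Ku) else 0) * (uK - RatFunc.C (xi0 n))) 0 := by
    have h := (HasVal.ite_zero (P := i = primeIdx n j) fun _ => HasVal.one).mul (hu.sub hxi)
    simpa using h
  unfold aEnt
  -- The delta term is made opaque so that only the outer case distinction is split.
  generalize (if i = primeIdx n j then (1 : Ku) else 0) * (uK - RatFunc.C (xi0 n)) = d at hdelta ⊢
  split_ifs with hij hlt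
  · convert (((hq (-2)).mul hu).sub hxi).mul (hu.sub HasVal.one) using 1
    rw [hij, sub_self, zpow_zero]
    ring
  · convert ((hq (-2)).sub HasVal.one).mul
      ((((hq (barIdx n i - barIdx n j)).mul hxi).mul (hu.sub HasVal.one)).sub hdelta) using 1
    ring
  · convert (((hq (-2)).sub HasVal.one).mul hu).mul
      (((hq (barIdx n i - barIdx n j)).mul (hu.sub HasVal.one)).sub hdelta) using 1
    ring

/-- Every entry of `(u−ξ)·R̄(u)`, viewed as a rational function of `u` over `ℚ(q)`,
is regular at `u = ξ`, and its value there equals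
`((q^{−2}−1)·ξ·(ξ−1)/(ξ−q^{−2}))` times the corresponding entry of `Q`. -/
theorem residue_of_Rbar_at_xi (n : ℕ) (hn : 2 ≤ n)
    (p r : Fin (2*n) × Fin (2*n)) :
    (Polynomial.eval (xi0 n)
        (RatFunc.denom ((uK - xiVal n qK) * Rbar n qK (xiVal n qK) uK p r)) ≠ 0)
    ∧ RatFunc.eval (RingHom.id Fq) (xi0 n)
        ((uK - xiVal n qK) * Rbar n qK (xiVal n qK) uK p r)
      = (q0 ^ (-2 : ℤ) - 1) * xi0 n * (xi0 n - 1) / (xi0 n - q0 ^ (-2 : ℤ))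
          * Qmat n q0 p r := by
  apply HasVal.denom_ne_zero_and_eval
  rw [xiVal_qK]
  have hu : HasVal (xi0 n) uK (xi0 n) := HasVal.var
  have hs : HasVal (xi0 n) (uK - RatFunc.C (xi0 n)) 0 := by
    simpa using hu.sub (HasVal.const (x := xi0 n) (xi0 n))
  have hq : HasVal (xi0 n) qK q0 := HasVal.const _
  have hqi : HasVal (xi0 n) qK⁻¹ q0⁻¹ := hq.inv q0_ne_zero
  have hq2 : HasVal (xi0 n) (qK ^ (-2 : ℤ)) (q0 ^ (-2 : ℤ)) := by
    rw [qK_zpow]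
    exact HasVal.const _
  have hd : HasVal (xi0 n) (qK * uK - qK⁻¹) (q0 * xi0 n - q0⁻¹) := (hq.mul hu).sub hqi
  have hd0 := q0_mul_xi0_sub_ne_zero n hn
  have hexc : HasVal (xi0 n)
      ((uK - RatFunc.C (xi0 n)) * (if p.1 = primeIdx n p.2 ∧ r.1 = primeIdx n r.2 then
        aEnt n qK (RatFunc.C (xi0 n)) uK p.2 r.2 /
          ((uK - qK ^ (-2 : ℤ)) * (uK - RatFunc.C (xi0 n))) else 0))
      ((q0 ^ (-2 : ℤ) - 1) * xi0 n * (xi0 n - 1) / (xi0 n - q0 ^ (-2 : ℤ))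
          * Qmat n q0 p r) := by
    unfold Qmat
    rw [mul_ite, mul_ite, mul_zero, mul_zero]
    refine HasVal.ite_zero fun _ => ?_
    -- The factor `u - ξ` cancels against the pole of the exceptional block.
    rw [mul_div_assoc', mul_comm (uK - RatFunc.C (xi0 n)),
      mul_div_mul_right _ _ (uK_sub_xi_ne_zero n), div_mul_eq_mul_div]
    exact (hasVal_aEnt n p.2 r.2).div (hu.sub hq2) (xi0_sub_ne_zero n hn)
  unfold Rbar
  rw [mul_add]
  -- The first four summands are regular at `ξ`, so multiplication by `u - ξ` kills them there.
  have hreg := (hs.mul ((((HasVal.ite_zero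
      (P := p.1 = p.2 ∧ p.1 = r.1 ∧ p.1 = r.2) fun _ => HasVal.one).add
    (HasVal.ite_zero
      (P := p.1 = r.1 ∧ p.2 = r.2 ∧ p.1 ≠ p.2 ∧ p.1 ≠ primeIdx n p.2)
      fun _ => (hu.sub HasVal.one).div hd hd0)).add
    (HasVal.ite_zero
      (P := p.1 = r.2 ∧ p.2 = r.1 ∧ p.2.val < p.1.val ∧ p.1 ≠ primeIdx n p.2)
      fun _ => (hq.sub hqi).div hd hd0)).add
    (HasVal.ite_zero
      (P := p.1 = r.2 ∧ p.2 = r.1 ∧ p.1.val < p.2.val ∧ p.1 ≠ primeIdx n p.2)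
      fun _ => ((hq.sub hqi).mul hu).div hd hd0))).add hexc
  rw [zero_mul, zero_add] at hreg
  exact hreg

end
end

section
/- The operator R̂(q^{−2}) has the following symmetry properties. (i) For every 1 ≤ a ≤ 2n: R̂(q^{−2})(e_a⊗e_a) = 0 and (e_a⊗e_a)ᵀ·R̂(q^{−2}) = 0. (ii) For all 1 ≤ a < b ≤ 2n with b ≠ a′: R̂(q^{−2})(e_a⊗e_b) = e_a⊗e_b − q·(e_b⊗e_a) and (e_a⊗e_b)ᵀ·R̂(q^{−2}) = (e_a⊗e_b)ᵀ − q^{−1}·(e_b⊗e_a)ᵀ; consequently R̂(q^{−2})(e_a⊗e_b) = −q·R̂(q^{−2})(e_b⊗e_a) and (e_a⊗e_b)ᵀ·R̂(q^{−2}) = −q^{−1}·(e_b⊗e_a)ᵀ·R̂(q^{−2}). -/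
/-!
At `u = q^{−2}` the coefficient `(qu − q^{−1})/(u − 1)` of the terms `e_{ii}⊗e_{ii}` vanishes,
while `(q − q^{−1})/(u − 1) = −q` and `(q − q^{−1})u/(u − 1) = −q^{−1}`. The exceptional block
only involves index pairs of the form `(i′, i)`, so it touches neither `e_a⊗e_a` (as `a ≠ a′`,
`2n` being even) nor `e_a⊗e_b` with `b ≠ a′`. Hence on the rows and columns in question
`R̂(q^{−2})` is given by the explicit entries of `RhatF_apply_col` and `RhatF_apply_row`,
from which all the claims can be read off.
-/

noncomputable section

open Matrix Kronecker

/-- `R̂(u) = ((qu−q^{−1})/(u−1))·R̄(u)` with the removable singularity at `u = q^{−2}`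
cancelled in each entry (so that its entries are regular at `u = q^{−2}`,
and evaluating at `u = q^{−2}` gives the entrywise value of the rational function there). -/
def RhatF {F : Type*} [Field F] (n : ℕ) (q xi u : F) :
    Matrix (Fin (2*n) × Fin (2*n)) (Fin (2*n) × Fin (2*n)) F :=
  fun p r =>
    (if p.1 = p.2 ∧ p.1 = r.1 ∧ p.1 = r.2 then (q * u - q⁻¹) / (u - 1) else 0)
    + (if p.1 = r.1 ∧ p.2 = r.2 ∧ p.1 ≠ p.2 ∧ p.1 ≠ primeIdx n p.2 then (1 : F) else 0)
    + (if p.1 = r.2 ∧ p.2 = r.1 ∧ p.2.val < p.1.val ∧ p.1 ≠ primeIdx n p.2 then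
        (q - q⁻¹) / (u - 1) else 0)
    + (if p.1 = r.2 ∧ p.2 = r.1 ∧ p.1.val < p.2.val ∧ p.1 ≠ primeIdx n p.2 then
        (q - q⁻¹) * u / (u - 1) else 0)
    + (if p.1 = primeIdx n p.2 ∧ r.1 = primeIdx n r.2 then
        q * aEnt n q xi u p.2 r.2 / ((u - 1) * (u - xi)) else 0)

theorem primeIdx_ne_self (n : ℕ) (a : Fin (2*n)) : a ≠ primeIdx n a := by
  intro h
  have h' := congrArg Fin.val h
  have := a.isLt
  simp only [primeIdx] at h'
  omega

theorem primeIdx_swap (n : ℕ) {a b : Fin (2*n)} (h : a = primeIdx n b) : b = primeIdx n a := by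
  have h' := congrArg Fin.val h
  have := b.isLt
  apply Fin.ext
  simp only [primeIdx] at h' ⊢
  omega

theorem coeff_diag {F : Type*} [Field F] (q : F) (hq : q ≠ 0) :
    q * q ^ (-2 : ℤ) - q⁻¹ = 0 := by
  rw [_root_.zpow_neg, zpow_ofNat]
  field_simp
  ring

theorem coeff_low {F : Type*} [Field F] (q : F) (hq : q ≠ 0) (h1 : q ^ (-2 : ℤ) - 1 ≠ 0) :
    (q - q⁻¹) / (q ^ (-2 : ℤ) - 1) = -q := by
  rw [div_eq_iff h1]
  linear_combination coeff_diag q hq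

theorem coeff_up {F : Type*} [Field F] (q : F) (hq : q ≠ 0) (h1 : q ^ (-2 : ℤ) - 1 ≠ 0) :
    (q - q⁻¹) * q ^ (-2 : ℤ) / (q ^ (-2 : ℤ) - 1) = -q⁻¹ := by
  rw [div_eq_iff h1]
  linear_combination coeff_diag q hq

/-- Entries of `R̂(q^{−2})` in a column `(c, d)` with `c ≠ d′`. -/
theorem RhatF_apply_col {F : Type*} [Field F] (n : ℕ) (q xi : F) (hq : q ≠ 0)
    (h1 : q ^ (-2 : ℤ) - 1 ≠ 0) (c d : Fin (2*n)) (hcd : c ≠ primeIdx n d)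
    (p : Fin (2*n) × Fin (2*n)) :
    RhatF n q xi (q ^ (-2 : ℤ)) p (c, d) =
      (if p = (c, d) ∧ c ≠ d then 1 else 0)
        + (if p = (d, c) ∧ c ≠ d then (if c.val < d.val then -q else -q⁻¹) else 0) := by
  obtain ⟨i, j⟩ := p
  have hdc : d ≠ primeIdx n c := fun h => hcd (primeIdx_swap n h)
  simp only [RhatF, coeff_diag q hq, coeff_low q hq h1, coeff_up q hq h1, zero_div, Prod.mk.injEq,
    hcd, and_false, if_false, ite_self, add_zero, zero_add]
  grind (splits := 25)

/-- Entries of `R̂(q^{−2})` in a row `(c, d)` with `c ≠ d′`. -/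
theorem RhatF_apply_row {F : Type*} [Field F] (n : ℕ) (q xi : F) (hq : q ≠ 0)
    (h1 : q ^ (-2 : ℤ) - 1 ≠ 0) (c d : Fin (2*n)) (hcd : c ≠ primeIdx n d)
    (r : Fin (2*n) × Fin (2*n)) :
    RhatF n q xi (q ^ (-2 : ℤ)) (c, d) r =
      (if r = (c, d) ∧ c ≠ d then 1 else 0)
        + (if r = (d, c) ∧ c ≠ d then (if c.val < d.val then -q⁻¹ else -q) else 0) := by
  obtain ⟨i, j⟩ := r
  simp only [RhatF, coeff_diag q hq, coeff_low q hq h1, coeff_up q hq h1, zero_div, Prod.mk.injEq,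
    hcd, false_and, if_false, ite_self, add_zero, zero_add]
  grind (splits := 25)

/-- Symmetry properties of `R̂(q^{−2})`:
(i) it kills `e_a⊗e_a` on both sides;
(ii) for `a < b`, `b ≠ a′` it maps `e_a⊗e_b ↦ e_a⊗e_b − q·e_b⊗e_a`
(resp. `(e_a⊗e_b)ᵀ ↦ (e_a⊗e_b)ᵀ − q^{−1}(e_b⊗e_a)ᵀ` on row vectors), whence
`R̂(q^{−2})(e_a⊗e_b) = −q·R̂(q^{−2})(e_b⊗e_a)` and
`(e_a⊗e_b)ᵀR̂(q^{−2}) = −q^{−1}(e_b⊗e_a)ᵀR̂(q^{−2})`. -/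
theorem Rhat_symmetry
    {F : Type*} [Field F] (n : ℕ) (hn : 2 ≤ n) (q : F) (hq : q ≠ 0)
    (h1 : q ^ (-2 : ℤ) - 1 ≠ 0)
    (h2 : q ^ (-2 : ℤ) - xiVal n q ≠ 0) :
    (∀ a : Fin (2*n),
        RhatF n q (xiVal n q) (q ^ (-2 : ℤ)) *ᵥ Pi.single (a, a) (1 : F) = 0
      ∧ Pi.single (a, a) (1 : F) ᵥ* RhatF n q (xiVal n q) (q ^ (-2 : ℤ)) = 0)
    ∧ (∀ a b : Fin (2*n), a.val < b.val → b ≠ primeIdx n a →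
        RhatF n q (xiVal n q) (q ^ (-2 : ℤ)) *ᵥ Pi.single (a, b) (1 : F)
            = Pi.single (a, b) (1 : F) - q • (Pi.single (b, a) (1 : F) : Fin (2*n) × Fin (2*n) → F)
      ∧ Pi.single (a, b) (1 : F) ᵥ* RhatF n q (xiVal n q) (q ^ (-2 : ℤ))
            = Pi.single (a, b) (1 : F) - q⁻¹ • (Pi.single (b, a) (1 : F) : Fin (2*n) × Fin (2*n) → F)
      ∧ RhatF n q (xiVal n q) (q ^ (-2 : ℤ)) *ᵥ Pi.single (a, b) (1 : F)
            = (-q) • (RhatF n q (xiVal n q) (q ^ (-2 : ℤ)) *ᵥ Pi.single (b, a) (1 : F))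
      ∧ Pi.single (a, b) (1 : F) ᵥ* RhatF n q (xiVal n q) (q ^ (-2 : ℤ))
            = (-q⁻¹) • (Pi.single (b, a) (1 : F) ᵥ* RhatF n q (xiVal n q) (q ^ (-2 : ℤ)))) := by
  have hcol := RhatF_apply_col n q (xiVal n q) hq h1
  have hrow := RhatF_apply_row n q (xiVal n q) hq h1
  refine ⟨fun a => ⟨?_, ?_⟩, fun a b hab hb => ?_⟩
  · ext p
    simp only [mulVec_single_one, col_apply, hcol a a (primeIdx_ne_self n a)]
    simp
  · ext r
    simp only [single_one_vecMul, row_apply, hrow a a (primeIdx_ne_self n a)]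
    simp
  · have ha : a ≠ primeIdx n b := fun h => hb (primeIdx_swap n h)
    have hne : a ≠ b := fun h => by simp [h] at hab
    have hlt : ¬ b.val < a.val := by omega
    refine ⟨?_, ?_, ?_, ?_⟩ <;> ext p <;>
      simp only [mulVec_single_one, single_one_vecMul, col_apply, row_apply, Pi.smul_apply,
        Pi.sub_apply, Pi.single_apply, smul_eq_mul, hcol a b ha, hcol b a hb, hrow a b ha,
        hrow b a hb, hne, hne.symm, hab, hlt, ne_eq, not_false_eq_true, and_true, if_true,
        if_false] <;>
      by_cases hp : p = (a, b) <;> by_cases hp' : p = (b, a) <;> simp_all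

end
end

section
/- For an indeterminate u, the subspace W = span{e_k⊗e_l : 1 ≤ k, l ≤ n} of V⊗V is invariant under R̄(u), and under the identification of W with F^n ⊗ F^n the restriction of R̄(u) to W equals the type-A R-matrix R_A(u) = Σ_{i=1}^{n} E_{ii}⊗E_{ii} + ((u−1)/(qu−q^{−1})) Σ_{i≠j} E_{ii}⊗E_{jj} + ((q−q^{−1})/(qu−q^{−1})) Σ_{i>j} E_{ij}⊗E_{ji} + ((q−q^{−1})u/(qu−q^{−1})) Σ_{i<j} E_{ij}⊗E_{ji}, where E_{ij} (1 ≤ i,j ≤ n) are the n×n matrix units and the sums range over {1,…,n}. -/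
/-!
An index `i ≤ n` (1-based) has `i′ = 2n+1−i > n`, so no pair `(k, l)` of indices in `{1,…,n}`
satisfies `k = l′` (`ne_primeIdx_of_lt`). Hence the exceptional block `a_{ij}(u) e_{i′j′}⊗e_{ij}`,
whose columns are the pairs `(j′, j)`, kills `W`, and the conditions `i ≠ j′` in the other sums hold
automatically on `W`. The remaining terms only permute the two tensor factors, so they preserve `W`
and restrict there to the four terms of `R_A(u)`.
-/

noncomputable section

open Matrix Kronecker

/-- The type-A R-matrix `R_A(u)` on `F^n ⊗ F^n`. -/
def RA {F : Type*} [Field F] (n : ℕ) (q u : F) :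
    Matrix (Fin n × Fin n) (Fin n × Fin n) F :=
  fun p r =>
    (if p.1 = p.2 ∧ p.1 = r.1 ∧ p.1 = r.2 then (1 : F) else 0)
    + (if p.1 = r.1 ∧ p.2 = r.2 ∧ p.1 ≠ p.2 then (u - 1) / (q * u - q⁻¹) else 0)
    + (if p.1 = r.2 ∧ p.2 = r.1 ∧ p.2.val < p.1.val then (q - q⁻¹) / (q * u - q⁻¹) else 0)
    + (if p.1 = r.2 ∧ p.2 = r.1 ∧ p.1.val < p.2.val then (q - q⁻¹) * u / (q * u - q⁻¹) else 0)

lemma ne_primeIdx_of_lt {n : ℕ} {a b : Fin (2*n)} (ha : a.val < n) (hb : b.val < n) :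
    a ≠ primeIdx n b := by
  intro h
  have := congrArg Fin.val h
  simp only [primeIdx] at this
  omega

/-- The subspace `W = span{e_k⊗e_l : 1 ≤ k,l ≤ n}` is invariant under `R̄(u)`, and the
restriction of `R̄(u)` to `W` is the type-A R-matrix `R_A(u)`. -/
theorem Rbar_restricts_to_typeA
    {F : Type*} [Field F] (n : ℕ) (hn : 2 ≤ n) (q u : F) (hq : q ≠ 0)
    (h1 : q * u - q⁻¹ ≠ 0)
    (h2 : u - q ^ (-2 : ℤ) ≠ 0)
    (h3 : u - xiVal n q ≠ 0) :
    (∀ a b c d : Fin (2*n), c.val < n → d.val < n → ¬(a.val < n ∧ b.val < n) →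
        Rbar n q (xiVal n q) u (a, b) (c, d) = 0)
    ∧ (∀ i j k l : Fin n,
        Rbar n q (xiVal n q) u
          (Fin.castLE (by omega) i, Fin.castLE (by omega) j)
          (Fin.castLE (by omega) k, Fin.castLE (by omega) l)
        = RA n q u (i, j) (k, l)) := by
  constructor
  · intro a b c d hc hd hab
    have hcd := ne_primeIdx_of_lt hc hd
    -- The pair `(a, b)` is not a rearrangement of `(c, d)`, so the non-exceptional terms vanish.
    have hid : ¬(a = c ∧ b = d) := by
      rintro ⟨rfl, rfl⟩
      exact hab ⟨hc, hd⟩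
    have hswap : ¬(a = d ∧ b = c) := by
      rintro ⟨rfl, rfl⟩
      exact hab ⟨hd, hc⟩
    have hdiag : ¬(a = b ∧ a = c ∧ a = d) := by
      rintro ⟨rfl, rfl, rfl⟩
      exact hab ⟨hc, hc⟩
    simp only [Rbar]
    rw [if_neg hdiag, if_neg (fun h => hid ⟨h.1, h.2.1⟩),
      if_neg (fun h => hswap ⟨h.1, h.2.1⟩), if_neg (fun h => hswap ⟨h.1, h.2.1⟩),
      if_neg (fun h => hcd h.2)]
    simp
  · intro i j k l
    have hle : n ≤ 2 * n := by omega
    have hij : Fin.castLE hle i ≠ primeIdx n (Fin.castLE hle j) :=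
      ne_primeIdx_of_lt i.isLt j.isLt
    simp [Rbar, RA, hij]

end
end
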